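/- Cut reduction for GL nested sequents: if Γ{A} and Γ{A⊥} both have cut-free derivations in the nested sequent calculus for GL, then Γ{·} has a cut-free derivation. The proof is by lexicographic induction on (size of A, sum of the heights of the two derivations), using diagonal-formula elimination for the principal ◇/□ case. -/

import Mathlib

/-- Formulas of GL in negation normal form. -/
inductive Formula : Type where
  | pos : ℕ → Formula
  | neg : ℕ → Formula
  | and : Formula → Formula → Formula
  | or  : Formula → Formula → Formula
  | box : Formula → Formula
  | dia : Formula → Formula
deriving DecidableEq

/-- Negation `A⊥` of a formula, via De Morgan duality. -/
def Formula.negate : Formula → Formula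
  | .pos a => .neg a
  | .neg a => .pos a
  | .and A B => .or A.negate B.negate
  | .or A B => .and A.negate B.negate
  | .box A => .dia A.negate
  | .dia A => .box A.negate

/-- An element of a nested sequent: a formula or a nested (bracketed) sequent. -/
inductive SeqElem : Type where
  | fml : Formula → SeqElem
  | nest : List SeqElem → SeqElem

/-- A nested sequent. -/
abbrev Sequent := List SeqElem

/-- Unary contexts: a nested sequent with a single hole. -/
inductive Ctx : Type where
  | hole : Sequent → Ctx
  | nest : Sequent → Ctx → Ctx

/-- Fill the hole of a context with a sequent. -/
def Ctx.fill : Ctx → Sequent → Sequent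
  | .hole Δ, Γ => Δ ++ Γ
  | .nest Δ c, Γ => .nest (c.fill Γ) :: Δ

/-- Depth of a context: number of brackets surrounding the hole. -/
def Ctx.depth : Ctx → ℕ
  | .hole _ => 0
  | .nest _ c => c.depth + 1

/-- Equivalence of nested sequents up to (deep) exchange. -/
inductive SeqEquiv : Sequent → Sequent → Prop where
  | nil : SeqEquiv [] []
  | cons {e : SeqElem} {Γ Δ : Sequent} : SeqEquiv Γ Δ → SeqEquiv (e :: Γ) (e :: Δ)
  | consNest {Γ' Δ' Γ Δ : Sequent} :
      SeqEquiv Γ' Δ' → SeqEquiv Γ Δ → SeqEquiv (.nest Γ' :: Γ) (.nest Δ' :: Δ)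
  | swap (a b : SeqElem) (Γ : Sequent) : SeqEquiv (a :: b :: Γ) (b :: a :: Γ)
  | trans {Γ Δ Θ : Sequent} : SeqEquiv Γ Δ → SeqEquiv Δ Θ → SeqEquiv Γ Θ

/-- `DerivH n Γ`: `Γ` has a cut-free derivation of height at most `n`. -/
inductive DerivH : ℕ → Sequent → Prop where
  | id (n : ℕ) (c : Ctx) (a : ℕ) :
      DerivH n (c.fill [.fml (.pos a), .fml (.neg a)])
  | and {n : ℕ} {c : Ctx} {A B : Formula} :
      DerivH n (c.fill [.fml A]) → DerivH n (c.fill [.fml B]) →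
      DerivH (n + 1) (c.fill [.fml (.and A B)])
  | or {n : ℕ} {c : Ctx} {A B : Formula} :
      DerivH n (c.fill [.fml A, .fml B]) →
      DerivH (n + 1) (c.fill [.fml (.or A B)])
  | box {n : ℕ} {c : Ctx} {A : Formula} :
      DerivH n (c.fill [.nest [.fml (.dia A.negate), .fml A]]) →
      DerivH (n + 1) (c.fill [.fml (.box A)])
  | dia {n : ℕ} (c d : Ctx) {A : Formula} :
      0 < d.depth →
      DerivH n (c.fill (d.fill [.fml A] ++ [.fml (.dia A)])) →
      DerivH (n + 1) (c.fill (d.fill [] ++ [.fml (.dia A)]))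
  | exch {n : ℕ} {Γ Δ : Sequent} : SeqEquiv Γ Δ → DerivH n Γ → DerivH n Δ
  | up {n : ℕ} {Γ : Sequent} : DerivH n Γ → DerivH (n + 1) Γ

/-- Derivability where cut is permitted on formulas satisfying `P`. -/
inductive DerivWith (P : Formula → Prop) : Sequent → Prop where
  | id (c : Ctx) (a : ℕ) :
      DerivWith P (c.fill [.fml (.pos a), .fml (.neg a)])
  | and {c : Ctx} {A B : Formula} :
      DerivWith P (c.fill [.fml A]) → DerivWith P (c.fill [.fml B]) →
      DerivWith P (c.fill [.fml (.and A B)])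
  | or {c : Ctx} {A B : Formula} :
      DerivWith P (c.fill [.fml A, .fml B]) →
      DerivWith P (c.fill [.fml (.or A B)])
  | box {c : Ctx} {A : Formula} :
      DerivWith P (c.fill [.nest [.fml (.dia A.negate), .fml A]]) →
      DerivWith P (c.fill [.fml (.box A)])
  | dia (c d : Ctx) {A : Formula} :
      0 < d.depth →
      DerivWith P (c.fill (d.fill [.fml A] ++ [.fml (.dia A)])) →
      DerivWith P (c.fill (d.fill [] ++ [.fml (.dia A)]))
  | cut {c : Ctx} {A : Formula} : P A →
      DerivWith P (c.fill [.fml A]) → DerivWith P (c.fill [.fml A.negate]) →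
      DerivWith P (c.fill [])
  | exch {Γ Δ : Sequent} : SeqEquiv Γ Δ → DerivWith P Γ → DerivWith P Δ

/-- Cut-free derivability. -/
abbrev Deriv : Sequent → Prop := DerivWith (fun _ => False)

/-!
Cuts are eliminated through semantics. A derivation, with or without cuts, proves only sequents
that are valid in all well-founded trees, so it suffices to derive every valid sequent without cut.

Proof search works on one node at a time. Once conjunctions and disjunctions are decomposed, a
valid sequent either contains complementary literals or has a valid successor: the content of a
bracket, or `◇A⊥, A` for a box `□A`, together with `B` and `◇B` for each `◇B` at the node.
Otherwise countermodels of all successors could be grafted onto a common root.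

The search terminates because entering a bracket decreases the nesting, while unfolding `□A` adds
the diamond `◇A⊥`, and only finitely many diamonds are available. If `◇A⊥` is already present, the
generalized identity `□A, ◇A⊥` closes the branch.
-/

namespace SeqEquiv

theorem refl : ∀ Γ : Sequent, SeqEquiv Γ Γ
  | [] => .nil
  | _ :: Γ => .cons (refl Γ)

theorem symm {Γ Δ : Sequent} (h : SeqEquiv Γ Δ) : SeqEquiv Δ Γ := by
  induction h with
  | nil => exact .nil
  | cons _ ih => exact .cons ih
  | consNest _ _ ih₁ ih₂ => exact .consNest ih₁ ih₂
  | swap a b Γ => exact .swap b a Γ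
  | trans _ _ ih₁ ih₂ => exact .trans ih₂ ih₁

theorem of_perm {Γ Δ : Sequent} (h : Γ.Perm Δ) : SeqEquiv Γ Δ := by
  induction h with
  | nil => exact .nil
  | cons _ _ ih => exact .cons ih
  | swap a b Γ => exact .swap b a Γ
  | trans _ _ ih₁ ih₂ => exact .trans ih₁ ih₂

theorem fill_of_perm (c : Ctx) {Γ Δ : Sequent} (h : Γ.Perm Δ) :
    SeqEquiv (c.fill Γ) (c.fill Δ) := by
  induction c with
  | hole Θ => exact .of_perm (h.append_left Θ)
  | nest Θ c ih => exact .consNest ih (refl Θ)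

end SeqEquiv

theorem exists_perm_cons {α : Type*} {a : α} {l : List α} (h : a ∈ l) :
    ∃ l', l.Perm (a :: l') := by
  obtain ⟨s, t, rfl⟩ := List.append_of_mem h
  exact ⟨s ++ t, List.perm_middle⟩

theorem exists_perm_append_singleton {α : Type*} {a : α} {k l m : List α} (ha : a ∉ l)
    (h : (a :: k).Perm (l ++ m)) : ∃ m', (m' ++ [a]).Perm m ∧ k.Perm (l ++ m') := by
  have hmem : a ∈ m := (List.mem_append.1 (h.subset List.mem_cons_self)).resolve_left ha
  obtain ⟨m', hm⟩ := exists_perm_cons hmem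
  refine ⟨m', (List.perm_append_singleton a m').trans hm.symm, List.Perm.cons_inv (a := a) ?_⟩
  exact h.trans ((hm.append_left l).trans List.perm_middle)

theorem Formula.negate_negate (A : Formula) : A.negate.negate = A := by
  induction A <;> simp_all [Formula.negate]

namespace Ctx

/-- The context `c` with the side elements `Θ` added next to its hole. -/
def add (Θ : Sequent) : Ctx → Ctx
  | .hole Δ => .hole (Δ ++ Θ)
  | .nest Δ c => .nest Δ (c.add Θ)

/-- The context that adds `Θ` next to the hole of `c` and moves the hole into a new bracket. -/
def push (Θ : Sequent) : Ctx → Ctx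
  | .hole Δ => .nest (Δ ++ Θ) (.hole [])
  | .nest Δ c => .nest Δ (c.push Θ)

/-- `c.DiaAbove A` means that `◇A` occurs at a proper ancestor of the hole of `c`, so that the
rule (◇) can add `A` at the hole. -/
def DiaAbove (A : Formula) : Ctx → Prop
  | .hole _ => False
  | .nest Δ c => .fml (.dia A) ∈ Δ ∨ c.DiaAbove A

theorem add_fill (c : Ctx) (Θ Γ : Sequent) : (c.add Θ).fill Γ = c.fill (Θ ++ Γ) := by
  induction c with
  | hole Δ => exact List.append_assoc Δ Θ Γ
  | nest Δ c ih => simp only [add, fill, ih]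

theorem push_fill (c : Ctx) (Θ Γ : Sequent) :
    SeqEquiv ((c.push Θ).fill Γ) (c.fill (Θ ++ [.nest Γ])) := by
  induction c with
  | hole Δ =>
    simp only [push, fill, List.nil_append, ← List.append_assoc]
    exact .of_perm (List.perm_append_singleton _ _).symm
  | nest Δ c ih => exact .consNest ih (.refl Δ)

variable {c : Ctx} {A : Formula} {Θ : Sequent}

theorem DiaAbove.add (Θ : Sequent) (h : c.DiaAbove A) : (c.add Θ).DiaAbove A := by
  induction c with
  | hole Δ => exact h.elim
  | nest Δ c ih => exact h.imp_right ih

theorem DiaAbove.push (Θ : Sequent) (h : c.DiaAbove A) : (c.push Θ).DiaAbove A := by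
  induction c with
  | hole Δ => exact h.elim
  | nest Δ c ih => exact h.imp_right ih

theorem diaAbove_push_of_mem (h : .fml (.dia A) ∈ Θ) : (c.push Θ).DiaAbove A := by
  induction c with
  | hole Δ => exact .inl (List.mem_append_right Δ h)
  | nest Δ c ih => exact .inr ih

theorem DiaAbove.exists_fill (h : c.DiaAbove A) :
    ∃ c₀ d : Ctx, 0 < d.depth ∧
      ∀ Γ, SeqEquiv (c.fill Γ) (c₀.fill (d.fill Γ ++ [.fml (.dia A)])) := by
  induction c with
  | hole Δ => exact h.elim
  | nest Δ c ih =>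
    rcases h with h | h
    · obtain ⟨Δ', hΔ⟩ := exists_perm_cons h
      refine ⟨.hole [], .nest Δ' c, Nat.succ_pos _, fun Γ => .of_perm ?_⟩
      exact (hΔ.trans (List.perm_append_singleton _ _).symm).cons _
    · obtain ⟨c₀, d, hd, hfill⟩ := ih h
      exact ⟨.nest Δ c₀, d, hd, fun Γ => .consNest (hfill Γ) (.refl Δ)⟩

end Ctx

namespace DerivWith

variable {P : Formula → Prop} {c : Ctx} {A : Formula} {Γ : Sequent}

theorem of_diaAbove (hA : c.DiaAbove A) (h : DerivWith P (c.fill (Γ ++ [.fml A]))) :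
    DerivWith P (c.fill Γ) := by
  obtain ⟨c₀, d, hd, hfill⟩ := (hA.add Γ).exists_fill
  simp only [Ctx.add_fill] at hfill
  rw [← Γ.append_nil]
  exact .exch (hfill []).symm (.dia c₀ d hd (.exch (hfill _) h))

theorem of_forall_diaAbove {S : List Formula} (hS : ∀ A ∈ S, c.DiaAbove A)
    (h : DerivWith P (c.fill (Γ ++ S.map .fml))) : DerivWith P (c.fill Γ) := by
  induction S generalizing Γ with
  | nil => simpa only [List.map_nil, List.append_nil] using h
  | cons A S ih =>
    obtain ⟨hA, hS⟩ := List.forall_mem_cons.1 hS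
    exact of_diaAbove hA (ih hS (by rwa [List.append_assoc]))

end DerivWith

/-! ### Semantics in well-founded trees -/

/-- Well-founded trees whose nodes carry valuations: the Kripke models of GL used here. -/
inductive KripkeTree : Type 1 where
  | node (v : ℕ → Prop) (ι : Type) (child : ι → KripkeTree) : KripkeTree

namespace KripkeTree

/-- The valuation at the root. -/
def val : KripkeTree → ℕ → Prop
  | node v _ _ => v

/-- The accessibility relation: `t.Reaches s` means that `s` is a proper subtree of `t`. -/
def Reaches : KripkeTree → KripkeTree → Prop
  | node _ _ child, s => ∃ i, child i = s ∨ (child i).Reaches s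

theorem Reaches.trans {t s r : KripkeTree} (hts : t.Reaches s) (hsr : s.Reaches r) :
    t.Reaches r := by
  induction t with
  | node v ι child ih =>
    obtain ⟨i, rfl | hs⟩ := hts
    · exact ⟨i, .inr hsr⟩
    · exact ⟨i, .inr (ih i hs)⟩

theorem wellFounded_reaches : WellFounded fun s t : KripkeTree => t.Reaches s := by
  refine ⟨fun t => ?_⟩
  induction t with
  | node v ι child ih =>
    refine .intro _ ?_
    rintro s ⟨i, rfl | hs⟩
    · exact ih i
    · exact (ih i).inv hs

end KripkeTree

/-- Truth of a formula at the root of a tree. -/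
def Formula.Eval : Formula → KripkeTree → Prop
  | .pos a, t => t.val a
  | .neg a, t => ¬ t.val a
  | .and A B, t => A.Eval t ∧ B.Eval t
  | .or A B, t => A.Eval t ∨ B.Eval t
  | .box A, t => ∀ s, t.Reaches s → A.Eval s
  | .dia A, t => ∃ s, t.Reaches s ∧ A.Eval s

theorem Formula.eval_negate (A : Formula) (t : KripkeTree) :
    A.negate.Eval t ↔ ¬ A.Eval t := by
  induction A generalizing t with
  | pos a => rfl
  | neg a => exact not_not.symm
  | and A B ihA ihB => simp only [negate, Eval, ihA, ihB, not_and_or]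
  | or A B ihA ihB => simp only [negate, Eval, ihA, ihB, not_or]
  | box A ih => simp only [negate, Eval, ih, not_forall, exists_prop]
  | dia A ih => simp only [negate, Eval, ih, not_exists, not_and]

mutual
/-- Truth of a sequent element at the root of a tree, reading brackets as boxes. -/
def SeqElem.Eval : SeqElem → KripkeTree → Prop
  | .fml A, t => A.Eval t
  | .nest Γ, t => ∀ s, t.Reaches s → Sequent.Eval Γ s
/-- Truth of a nested sequent, read disjunctively, at the root of a tree. -/
def Sequent.Eval : Sequent → KripkeTree → Prop
  | [], _ => False
  | e :: Γ, t => e.Eval t ∨ Sequent.Eval Γ t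
end

/-- Truth in every tree. -/
def Valid (Γ : Sequent) : Prop :=
  ∀ t, Γ.Eval t

namespace Sequent

variable {Γ Δ : Sequent} {t : KripkeTree}

theorem eval_iff_exists_mem : Γ.Eval t ↔ ∃ e ∈ Γ, e.Eval t := by
  induction Γ with
  | nil => simp [Eval]
  | cons e Γ ih => simp [Eval, ih]

theorem eval_append : Eval (Γ ++ Δ) t ↔ Γ.Eval t ∨ Δ.Eval t := by
  simp only [eval_iff_exists_mem, List.mem_append, or_and_right, exists_or]

theorem Eval.of_equiv (h : SeqEquiv Γ Δ) : Γ.Eval t → Δ.Eval t := by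
  induction h generalizing t with
  | nil => exact id
  | cons _ ih => exact Or.imp_right ih
  | consNest _ _ ih₁ ih₂ =>
    simp only [Eval, SeqElem.Eval]
    exact Or.imp (fun h s hs => ih₁ (h s hs)) ih₂
  | swap a b Γ => exact or_left_comm.1
  | trans _ _ ih₁ ih₂ => exact ih₂ ∘ ih₁

theorem eval_fill_of_premises (c : Ctx) (premises : Set Sequent)
    (hlocal : ∀ s, s = t ∨ t.Reaches s → (∀ Γ ∈ premises, Γ.Eval s) → Δ.Eval s)
    (h : ∀ Γ ∈ premises, (c.fill Γ).Eval t) : (c.fill Δ).Eval t := by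
  induction c generalizing t with
  | hole Θ =>
    simp only [Ctx.fill, eval_append] at h ⊢
    exact or_iff_not_imp_left.2 fun hΘ =>
      hlocal t (.inl rfl) fun Γ hΓ => (h Γ hΓ).resolve_left hΘ
  | nest Θ c ih =>
    simp only [Ctx.fill, Eval, SeqElem.Eval] at h ⊢
    refine or_iff_not_imp_right.2 fun hΘ s hts => ih ?_ fun Γ hΓ =>
      (h Γ hΓ).resolve_right hΘ s hts
    rintro r (rfl | hsr)
    · exact hlocal r (.inr hts)
    · exact hlocal r (.inr (hts.trans hsr))

theorem eval_fill_box {c : Ctx} {A : Formula}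
    (h : (c.fill [.nest [.fml (.dia A.negate), .fml A]]).Eval t) :
    (c.fill [.fml (.box A)]).Eval t := by
  refine eval_fill_of_premises c {_} (fun t _ h => .inl ?_) (by simpa using h)
  simp only [Set.mem_singleton_iff, forall_eq, Eval, SeqElem.Eval, Formula.Eval, A.eval_negate,
    or_false] at h
  intro s hts
  induction s using KripkeTree.wellFounded_reaches.induction with
  | _ s ih =>
    refine (h s hts).resolve_left ?_
    rintro ⟨r, hsr, hr⟩
    exact hr (ih r hsr (hts.trans hsr))

theorem eval_fill_nil_of_depth_pos {d : Ctx} (hd : 0 < d.depth) {A : Formula}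
    (hA : ∀ s, t.Reaches s → ¬ A.Eval s) (h : (d.fill [.fml A]).Eval t) :
    (d.fill []).Eval t := by
  cases d with
  | hole Δ => exact absurd hd (lt_irrefl 0)
  | nest Δ d =>
    refine h.imp_left fun h s hts => ?_
    refine eval_fill_of_premises d {[.fml A]} (fun r hr h => ?_) (by simpa using h s hts)
    have htr : t.Reaches r := hr.elim (fun h => h ▸ hts) hts.trans
    exact absurd (by simpa [Eval, SeqElem.Eval] using h) (hA r htr)

theorem eval_fill_dia {c d : Ctx} (hd : 0 < d.depth) {A : Formula}
    (h : (c.fill (d.fill [.fml A] ++ [.fml (.dia A)])).Eval t) :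
    (c.fill (d.fill [] ++ [.fml (.dia A)])).Eval t := by
  refine eval_fill_of_premises c {_} (fun t _ h => ?_) (by simpa using h)
  simp only [Set.mem_singleton_iff, forall_eq, eval_append] at h ⊢
  refine or_iff_not_imp_right.2 fun hdia => eval_fill_nil_of_depth_pos hd ?_ (h.resolve_right hdia)
  exact fun s hts hA => hdia (.inl ⟨s, hts, hA⟩)

theorem eval_fill_cut {c : Ctx} {A : Formula} (h₁ : (c.fill [.fml A]).Eval t)
    (h₂ : (c.fill [.fml A.negate]).Eval t) : (c.fill []).Eval t := by
  refine eval_fill_of_premises c {[.fml A], [.fml A.negate]} (fun s _ h => ?_) (by simp [h₁, h₂])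
  simp [Eval, SeqElem.Eval, A.eval_negate] at h

end Sequent

theorem Valid.of_perm {Γ Δ : Sequent} (h : Γ.Perm Δ) (hΓ : Valid Γ) : Valid Δ :=
  fun t => .of_equiv (.of_perm h) (hΓ t)

theorem DerivWith.valid {P : Formula → Prop} {Γ : Sequent} (h : DerivWith P Γ) : Valid Γ := by
  intro t
  induction h with
  | id c a =>
    refine Sequent.eval_fill_of_premises c ∅ (fun s _ _ => ?_) (by simp)
    simp [Sequent.Eval, SeqElem.Eval, Formula.Eval, em]
  | @and c A B _ _ ihA ihB =>
    refine Sequent.eval_fill_of_premises c {[.fml A], [.fml B]} (fun s _ h => ?_)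
      (by simp [ihA, ihB])
    simpa [Sequent.Eval, SeqElem.Eval, Formula.Eval] using h
  | @or c A B _ ih =>
    refine Sequent.eval_fill_of_premises c {[.fml A, .fml B]} (fun s _ h => ?_) (by simp [ih])
    simpa [Sequent.Eval, SeqElem.Eval, Formula.Eval] using h
  | box _ ih => exact Sequent.eval_fill_box ih
  | dia c d hd _ ih => exact Sequent.eval_fill_dia hd ih
  | cut _ _ _ ih₁ ih₂ => exact Sequent.eval_fill_cut ih₁ ih₂
  | exch h _ ih => exact ih.of_equiv h

/-! ### Proof search at a single node -/

namespace Sequent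

/-- The formulas at the root of a nested sequent. -/
def fmls (Γ : Sequent) : List Formula :=
  Γ.filterMap fun
    | .fml A => some A
    | .nest _ => none

/-- The formulas `A` such that `◇A` is at the root of a nested sequent. -/
def diaBodies (Γ : Sequent) : List Formula :=
  (fmls Γ).filterMap fun
    | .dia A => some A
    | _ => none

/-- The formulas that a node accessible from the root of `Γ` may assume: `B` and `◇B` for every
`◇B` at the root. -/
def inherited (Γ : Sequent) : Sequent :=
  ((diaBodies Γ).map Formula.dia ++ diaBodies Γ).map .fml

/-- `Successor Γ Δ` means that backward proof search may enter a bracket `Δ` from the root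
of `Γ`, either an existing one or the one created by the rule (□). -/
inductive Successor (Γ : Sequent) : Sequent → Prop
  | nest {Δ : Sequent} (h : .nest Δ ∈ Γ) : Successor Γ Δ
  | box {A : Formula} (h : .fml (.box A) ∈ Γ) : Successor Γ [.fml (.dia A.negate), .fml A]

theorem mem_fmls {Γ : Sequent} {A : Formula} : A ∈ fmls Γ ↔ .fml A ∈ Γ := by
  simp only [fmls, List.mem_filterMap]
  constructor
  · rintro ⟨_ | _, he, ⟨⟩⟩
    exact he
  · exact fun h => ⟨_, h, rfl⟩

theorem mem_diaBodies {Γ : Sequent} {A : Formula} : A ∈ diaBodies Γ ↔ .fml (.dia A) ∈ Γ := by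
  rw [diaBodies, List.mem_filterMap, ← mem_fmls]
  constructor
  · rintro ⟨_ | _ | _ | _ | _ | _, hB, ⟨⟩⟩
    exact hB
  · exact fun h => ⟨_, h, rfl⟩

theorem fml_mem_inherited {Γ : Sequent} {A : Formula} :
    .fml A ∈ inherited Γ ↔ (∃ B, .fml (.dia B) ∈ Γ ∧ .dia B = A) ∨ .fml (.dia A) ∈ Γ := by
  simp [inherited, mem_diaBodies]

end Sequent

/-- `Γ` is derivable at the hole of every context, even after omitting from `Γ` diamonds that
occur above the hole. This absorbs the fact that the nested calculus keeps a diamond at its node,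
while proof search copies it into the successors. -/
def StronglyDeriv (Γ : Sequent) : Prop :=
  ∀ (c : Ctx) (S : List Formula) (Θ : Sequent), (∀ A ∈ S, c.DiaAbove A) →
    Γ.Perm ((S.map Formula.dia).map .fml ++ Θ) → Deriv (c.fill Θ)

namespace StronglyDeriv

open Sequent

variable {Γ Δ Θ : Sequent} {A B : Formula} {c : Ctx} {S : List Formula}

theorem deriv (h : StronglyDeriv Γ) : Deriv Γ :=
  h (.hole []) [] Γ (by simp) (.refl Γ)

theorem of_perm (hp : Γ.Perm Δ) (h : StronglyDeriv Γ) : StronglyDeriv Δ :=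
  fun c S Θ hS hΔ => h c S Θ hS (hp.trans hΔ)

theorem of_principal {e : SeqElem} (he : ∀ A, e ≠ .fml (.dia A))
    (h : ∀ (c : Ctx) (S : List Formula) (Θ : Sequent), (∀ A ∈ S, c.DiaAbove A) →
      Γ.Perm ((S.map Formula.dia).map .fml ++ Θ) → Deriv (c.fill (Θ ++ [e]))) :
    StronglyDeriv (e :: Γ) := by
  intro c S Θ hS hp
  obtain ⟨Θ', hΘ, hΓ⟩ := exists_perm_append_singleton (by simpa using fun A _ => (he A).symm) hp
  exact .exch (.fill_of_perm c hΘ) (h c S Θ' hS hΓ)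

theorem deriv_fill (h : StronglyDeriv (Δ ++ Γ)) (hS : ∀ A ∈ S, c.DiaAbove A)
    (hp : Γ.Perm ((S.map Formula.dia).map .fml ++ Θ)) : Deriv (c.fill (Θ ++ Δ)) := by
  refine h c S _ hS ?_
  rw [← List.append_assoc]
  exact List.perm_append_comm.trans (hp.append_right Δ)

theorem and (hA : StronglyDeriv (.fml A :: Γ)) (hB : StronglyDeriv (.fml B :: Γ)) :
    StronglyDeriv (.fml (.and A B) :: Γ) := by
  refine of_principal (by simp) fun c S Θ hS hp => ?_
  rw [← c.add_fill]
  refine .and ?_ ?_ <;> rw [c.add_fill]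
  · exact deriv_fill hA hS hp
  · exact deriv_fill hB hS hp

theorem or (h : StronglyDeriv (.fml A :: .fml B :: Γ)) :
    StronglyDeriv (.fml (.or A B) :: Γ) := by
  refine of_principal (by simp) fun c S Θ hS hp => ?_
  rw [← c.add_fill]
  refine .or ?_
  rw [c.add_fill]
  exact deriv_fill (Δ := [_, _]) h hS hp

theorem id (a : ℕ) (Γ : Sequent) : StronglyDeriv (.fml (.pos a) :: .fml (.neg a) :: Γ) := by
  refine of_principal (by simp) fun c S Θ _ hp => ?_
  obtain ⟨Θ', hΘ, -⟩ := exists_perm_append_singleton (by simp) hp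
  have h : Deriv (c.fill (Θ' ++ [.fml (.pos a), .fml (.neg a)])) := by
    rw [← c.add_fill]
    exact DerivWith.id _ a
  refine .exch (.fill_of_perm c (((List.Perm.swap _ _ _).append_left Θ').trans ?_)) h
  simpa using hΘ.append_right [.fml (.pos a)]

theorem deriv_fill_nest (h : StronglyDeriv (inherited Γ ++ Δ))
    (hΓ : ∀ A ∈ diaBodies Γ, .fml (.dia A) ∈ Θ ∨ c.DiaAbove A) :
    Deriv (c.fill (Θ ++ [.nest Δ])) := by
  have habove : ∀ A ∈ diaBodies Γ, (c.push Θ).DiaAbove A := fun A hA =>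
    (hΓ A hA).elim Ctx.diaAbove_push_of_mem (Ctx.DiaAbove.push Θ)
  refine .exch (c.push_fill Θ Δ) (.of_forall_diaAbove habove (h _ _ _ habove ?_))
  rw [inherited, List.map_append, List.append_assoc]
  exact List.perm_append_comm.append_left _

theorem mem_or_diaAbove (hS : ∀ A ∈ S, c.DiaAbove A)
    (hp : Γ.Perm ((S.map Formula.dia).map .fml ++ Θ)) (hA : .fml (.dia A) ∈ Γ) :
    .fml (.dia A) ∈ Θ ∨ c.DiaAbove A := by
  have hA := hp.subset hA
  simp only [List.mem_append, List.mem_map, SeqElem.fml.injEq, exists_eq_right,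
    Formula.dia.injEq] at hA
  exact hA.symm.imp_right (hS A)

theorem of_deriv_nest {e : SeqElem} (he : ∀ A, e ≠ .fml (.dia A)) (hmem : e ∈ Γ)
    (hrule : ∀ (c : Ctx) (Θ : Sequent),
      Deriv (c.fill (Θ ++ [.nest Δ])) → Deriv (c.fill (Θ ++ [e])))
    (h : StronglyDeriv (inherited Γ ++ Δ)) : StronglyDeriv Γ := by
  obtain ⟨Γ', hΓ⟩ := exists_perm_cons hmem
  refine of_perm hΓ.symm (of_principal he fun c S Θ hS hp => hrule c Θ ?_)
  refine deriv_fill_nest h fun A hA => mem_or_diaAbove hS hp ?_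
  exact (List.mem_cons.1 (hΓ.subset (mem_diaBodies.1 hA))).resolve_left (he A).symm

theorem of_successor (hΔ : Successor Γ Δ) (h : StronglyDeriv (inherited Γ ++ Δ)) :
    StronglyDeriv Γ := by
  cases hΔ with
  | nest hΔ => exact of_deriv_nest (by simp) hΔ (fun _ _ => _root_.id) h
  | box hA =>
    refine of_deriv_nest (by simp) hA (fun c Θ hnest => ?_) h
    rw [← c.add_fill] at hnest ⊢
    exact .box hnest

theorem of_mem_of_mem {e e' : SeqElem} (hne : e ≠ e') (h : ∀ Γ, StronglyDeriv (e :: e' :: Γ))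
    (he : e ∈ Γ) (he' : e' ∈ Γ) : StronglyDeriv Γ := by
  obtain ⟨Γ₁, hΓ₁⟩ := exists_perm_cons he
  obtain ⟨Γ₂, hΓ₂⟩ := exists_perm_cons ((List.mem_cons.1 (hΓ₁.subset he')).resolve_left hne.symm)
  exact of_perm (hΓ₁.trans (hΓ₂.cons e)).symm (h Γ₂)

theorem and_or {A' B' : Formula} (hA : ∀ Γ, StronglyDeriv (.fml A :: .fml A' :: Γ))
    (hB : ∀ Γ, StronglyDeriv (.fml B :: .fml B' :: Γ)) (Γ : Sequent) :
    StronglyDeriv (.fml (.and A B) :: .fml (.or A' B') :: Γ) := by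
  refine .and (.of_perm (.swap _ _ _) (.or ?_)) (.of_perm (.swap _ _ _) (.or ?_))
  · exact .of_perm (List.perm_middle (l₁ := [_, _])).symm (hA (.fml B' :: Γ))
  · exact .of_perm ((List.Perm.swap _ _ _).cons _ |>.trans (List.perm_middle (l₁ := [_, _])).symm)
      (hB (.fml A' :: Γ))

theorem of_box_of_dia (hA : ∀ Γ, .fml A ∈ Γ → .fml B ∈ Γ → StronglyDeriv Γ)
    (hbox : .fml (.box A) ∈ Γ) (hdia : .fml (.dia B) ∈ Γ) : StronglyDeriv Γ :=
  of_successor (.box hbox) <| hA _ (by simp) <|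
    List.mem_append_left _ (fml_mem_inherited.2 (.inr hdia))

theorem of_complementary (A : Formula) (Γ : Sequent) (hA : .fml A ∈ Γ)
    (hA' : .fml A.negate ∈ Γ) : StronglyDeriv Γ := by
  induction A generalizing Γ with
  | pos a => exact of_mem_of_mem (by simp) (id a) hA hA'
  | neg a => exact of_mem_of_mem (by simp) (id a) hA' hA
  | and A B ihA ihB =>
    refine of_mem_of_mem (by simp) (and_or ?_ ?_) hA hA'
    · exact fun Γ => ihA _ (by simp) (by simp)
    · exact fun Γ => ihB _ (by simp) (by simp)
  | or A B ihA ihB =>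
    refine of_mem_of_mem (by simp) (and_or ?_ ?_) hA' hA
    · exact fun Γ => ihA _ (by simp) (by simp)
    · exact fun Γ => ihB _ (by simp) (by simp)
  | box A ih => exact of_box_of_dia ih hA hA'
  | dia A ih => exact of_box_of_dia (fun Γ h h' => ih Γ h' h) hA' hA

end StronglyDeriv

/-! ### Completeness of the cut-free calculus -/

/-- The formulas `B` such that `◇B` can occur in a sequent obtained from `A` by proof search. -/
def Formula.modalBodies : Formula → Finset Formula
  | .pos _ | .neg _ => ∅
  | .and A B | .or A B => A.modalBodies ∪ B.modalBodies
  | .box A | .dia A => {A, A.negate} ∪ A.modalBodies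

theorem Formula.modalBodies_negate (A : Formula) : A.negate.modalBodies = A.modalBodies := by
  induction A with
  | pos a => rfl
  | neg a => rfl
  | and A B ihA ihB | or A B ihA ihB => simp only [negate, modalBodies, ihA, ihB]
  | box A ih | dia A ih => simp only [negate, modalBodies, ih, negate_negate, Finset.pair_comm]

namespace Sequent

/-- A sequent is stable if proof search has decomposed all conjunctions and disjunctions at its
root. -/
def IsStable (Γ : Sequent) : Prop :=
  ∀ A B, .fml (.and A B) ∉ Γ ∧ .fml (.or A B) ∉ Γ

/-- The total size of the formulas at the root, which decreases when a conjunction or a disjunction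
is decomposed. -/
noncomputable def formulaSize (Γ : Sequent) : ℕ :=
  ((fmls Γ).map sizeOf).sum

theorem formulaSize_cons (A : Formula) (Γ : Sequent) :
    formulaSize (.fml A :: Γ) = sizeOf A + formulaSize Γ := by
  simp [formulaSize, fmls]

theorem formulaSize_eq_of_perm {Γ Δ : Sequent} (h : Γ.Perm Δ) : formulaSize Γ = formulaSize Δ :=
  ((h.filterMap _).map _).sum_eq

theorem propositional_induction {p : Sequent → Prop}
    (perm : ∀ Γ Δ, Γ.Perm Δ → p Γ → p Δ) (stable : ∀ Γ, IsStable Γ → p Γ)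
    (and : ∀ A B Γ, p (.fml A :: Γ) → p (.fml B :: Γ) → p (.fml (.and A B) :: Γ))
    (or : ∀ A B Γ, p (.fml A :: .fml B :: Γ) → p (.fml (.or A B) :: Γ)) (Γ : Sequent) : p Γ := by
  induction hn : formulaSize Γ using Nat.strong_induction_on generalizing Γ with
  | _ n ih =>
    by_cases hΓ : IsStable Γ
    · exact stable Γ hΓ
    simp only [IsStable, not_forall, not_and_or, not_not] at hΓ
    obtain ⟨A, B, hmem | hmem⟩ := hΓ
    · obtain ⟨Δ, hΔ⟩ := exists_perm_cons hmem
      rw [formulaSize_eq_of_perm hΔ, formulaSize_cons, Formula.and.sizeOf_spec] at hn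
      have hA : formulaSize (.fml A :: Δ) < n := by rw [formulaSize_cons]; omega
      have hB : formulaSize (.fml B :: Δ) < n := by rw [formulaSize_cons]; omega
      exact perm _ _ hΔ.symm (and A B Δ (ih _ hA _ rfl) (ih _ hB _ rfl))
    · obtain ⟨Δ, hΔ⟩ := exists_perm_cons hmem
      rw [formulaSize_eq_of_perm hΔ, formulaSize_cons, Formula.or.sizeOf_spec] at hn
      have hAB : formulaSize (.fml A :: .fml B :: Δ) < n := by
        rw [formulaSize_cons, formulaSize_cons]; omega
      exact perm _ _ hΔ.symm (or A B Δ (ih _ hAB _ rfl))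

theorem exists_successor_of_valid {Γ : Sequent} (hst : IsStable Γ) (hΓ : Valid Γ) :
    (∃ a, .fml (.pos a) ∈ Γ ∧ .fml (.neg a) ∈ Γ) ∨
      ∃ Δ, Successor Γ Δ ∧ Valid (inherited Γ ++ Δ) := by
  by_contra! ⟨hlit, hsucc⟩
  have hmodel (Δ : {Δ // Successor Γ Δ}) : ∃ t, ¬ (inherited Γ).Eval t ∧ ¬ Sequent.Eval Δ.1 t := by
    simpa only [Valid, eval_append, not_forall, not_or] using hsucc Δ.1 Δ.2
  choose model hinherited hΔ using hmodel
  let root : KripkeTree := .node (fun a => .fml (.neg a) ∈ Γ) _ model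
  have hdia {A : Formula} (hA : .fml (.dia A) ∈ Γ) : ¬ (Formula.dia A).Eval root := by
    have hfalse {B : Formula} (i) (hB : .fml B ∈ inherited Γ) : ¬ B.Eval (model i) := fun h =>
      hinherited i (eval_iff_exists_mem.2 ⟨.fml B, hB, h⟩)
    rintro ⟨s, ⟨i, rfl | hs⟩, hAs⟩
    · exact hfalse i (fml_mem_inherited.2 (.inr hA)) hAs
    · exact hfalse i (fml_mem_inherited.2 (.inl ⟨A, hA, rfl⟩)) ⟨s, hs, hAs⟩
  have hreaches {Δ : Sequent} (h : Successor Γ Δ) : ∃ s, root.Reaches s ∧ ¬ Δ.Eval s :=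
    ⟨model ⟨Δ, h⟩, ⟨⟨Δ, h⟩, .inl rfl⟩, hΔ ⟨Δ, h⟩⟩
  obtain ⟨e, he, htrue⟩ := eval_iff_exists_mem.1 (hΓ root)
  match e with
  | .fml (.pos a) => exact hlit a he htrue
  | .fml (.neg _) => exact htrue he
  | .fml (.and A B) => exact (hst A B).1 he
  | .fml (.or A B) => exact (hst A B).2 he
  | .fml (.box A) =>
    obtain ⟨s, hs, hfalse⟩ := hreaches (.box he)
    exact hfalse (.inr (.inl (htrue s hs)))
  | .fml (.dia A) => exact hdia he htrue
  | .nest Δ =>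
    obtain ⟨s, hs, hfalse⟩ := hreaches (.nest he)
    exact hfalse (htrue s hs)

/-- The bodies of diamonds that proof search can still add to the root of `Γ`: the measure that
decreases when a box is unfolded. -/
def missingBodies (Γ : Sequent) : Finset Formula :=
  (fmls Γ).toFinset.biUnion Formula.modalBodies \ (diaBodies Γ).toFinset

section MissingBodies

variable {Γ Δ : Sequent} {A B : Formula}

theorem mem_missingBodies :
    B ∈ missingBodies Γ ↔ (∃ A, .fml A ∈ Γ ∧ B ∈ A.modalBodies) ∧ .fml (.dia B) ∉ Γ := by
  simp [missingBodies, mem_fmls, mem_diaBodies]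

theorem missingBodies_eq_of_perm (h : Γ.Perm Δ) : missingBodies Γ = missingBodies Δ := by
  ext B
  simp only [mem_missingBodies, h.mem_iff]

theorem missingBodies_and_left_subset :
    missingBodies (.fml A :: Γ) ⊆ missingBodies (.fml (.and A B) :: Γ) := by
  intro C
  simp only [mem_missingBodies, List.mem_cons]
  grind [Formula.modalBodies]

theorem missingBodies_and_right_subset :
    missingBodies (.fml B :: Γ) ⊆ missingBodies (.fml (.and A B) :: Γ) := by
  intro C
  simp only [mem_missingBodies, List.mem_cons]
  grind [Formula.modalBodies]

theorem missingBodies_or_subset :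
    missingBodies (.fml A :: .fml B :: Γ) ⊆ missingBodies (.fml (.or A B) :: Γ) := by
  intro C
  simp only [mem_missingBodies, List.mem_cons]
  grind [Formula.modalBodies]

theorem missingBodies_box_ssubset (hbox : .fml (.box A) ∈ Γ) (hdia : .fml (.dia A.negate) ∉ Γ) :
    missingBodies (inherited Γ ++ [.fml (.dia A.negate), .fml A]) ⊂ missingBodies Γ := by
  refine (Finset.ssubset_iff_of_subset fun C => ?_).2 ⟨A.negate, ?_, ?_⟩
  · simp only [mem_missingBodies, List.mem_append, fml_mem_inherited, List.mem_cons]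
    grind [Formula.modalBodies, Formula.modalBodies_negate, Formula.negate_negate]
  · exact mem_missingBodies.2 ⟨⟨_, hbox, by simp [Formula.modalBodies]⟩, hdia⟩
  · exact fun h => (mem_missingBodies.1 h).2 (by simp)

end MissingBodies

/-- Valid extensions by formulas of the brackets at the root of `Γ` are derivable: the induction
hypothesis for entering a bracket. -/
def BracketsDerivable (Γ : Sequent) : Prop :=
  ∀ Δ, .nest Δ ∈ Γ → ∀ L : List Formula,
    Valid (L.map .fml ++ Δ) → StronglyDeriv (L.map .fml ++ Δ)

end Sequent

namespace StronglyDeriv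

open Sequent

variable {Γ : Sequent}

theorem of_valid_of_stable (hst : IsStable Γ) (hnest : BracketsDerivable Γ) (hΓ : Valid Γ)
    (ih : ∀ Δ, missingBodies Δ ⊂ missingBodies Γ → BracketsDerivable Δ → Valid Δ →
      StronglyDeriv Δ) :
    StronglyDeriv Γ := by
  obtain ⟨a, hpos, hneg⟩ | ⟨Δ, hΔ, hvalid⟩ := exists_successor_of_valid hst hΓ
  · exact of_complementary (.pos a) Γ hpos hneg
  cases hΔ with
  | nest hΔ => exact of_successor (.nest hΔ) (hnest Δ hΔ _ hvalid)
  | @box A hA =>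
    by_cases hdia : .fml (.dia A.negate) ∈ Γ
    · exact of_complementary (.box A) Γ hA hdia
    · refine of_successor (.box hA) (ih _ (missingBodies_box_ssubset hA hdia) ?_ hvalid)
      simp [BracketsDerivable, inherited]

theorem of_valid_of_bracketsDerivable (hnest : BracketsDerivable Γ) (hΓ : Valid Γ) :
    StronglyDeriv Γ := by
  induction hM : missingBodies Γ using Finset.strongInduction generalizing Γ with
  | _ M ihM =>
    -- Decomposing a conjunction or disjunction may shrink the set, so `M` is kept as a bound.
    replace hM := hM.subset
    induction Γ using propositional_induction with
    | perm Γ Δ hp ih =>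
      refine of_perm hp (ih ?_ (hΓ.of_perm hp.symm) (missingBodies_eq_of_perm hp ▸ hM))
      exact fun Θ hΘ => hnest Θ (hp.subset hΘ)
    | stable Γ hst =>
      exact of_valid_of_stable hst hnest hΓ fun Δ hΔ hnest hvalid =>
        ihM _ (hΔ.trans_subset hM) hnest hvalid rfl
    | and A B Γ ihA ihB =>
      refine .and (ihA ?_ ?_ ?_) (ihB ?_ ?_ ?_)
      · exact fun Δ hΔ => hnest Δ (by simpa using hΔ)
      · exact fun t => (hΓ t).imp_left And.left
      · exact missingBodies_and_left_subset.trans hM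
      · exact fun Δ hΔ => hnest Δ (by simpa using hΔ)
      · exact fun t => (hΓ t).imp_left And.right
      · exact missingBodies_and_right_subset.trans hM
    | or A B Γ ih =>
      refine .or (ih ?_ ?_ (missingBodies_or_subset.trans hM))
      · exact fun Δ hΔ => hnest Δ (by simpa using hΔ)
      · exact fun t => or_assoc.1 (hΓ t)

theorem of_valid (Γ : Sequent) (L : List Formula) (h : Valid (L.map .fml ++ Γ)) :
    StronglyDeriv (L.map .fml ++ Γ) := by
  refine of_valid_of_bracketsDerivable (fun Δ hΔ L' h' => ?_) h
  have hΔ : .nest Δ ∈ Γ := by simpa using hΔ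
  have : sizeOf Δ < sizeOf Γ :=
    lt_trans (by simp : sizeOf Δ < sizeOf (SeqElem.nest Δ)) (List.sizeOf_lt_of_mem hΔ)
  exact of_valid Δ L' h'
termination_by sizeOf Γ
decreasing_by omega

end StronglyDeriv

theorem Valid.deriv {Γ : Sequent} (h : Valid Γ) : Deriv Γ :=
  (StronglyDeriv.of_valid Γ [] h).deriv

theorem cut_reduction_general {P Q : Formula → Prop} (c : Ctx) (A : Formula)
    (h1 : DerivWith P (c.fill [.fml A])) (h2 : DerivWith Q (c.fill [.fml A.negate])) :
    Deriv (c.fill []) :=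
  Valid.deriv fun t => Sequent.eval_fill_cut (h1.valid t) (h2.valid t)

/-- cut reduction for GL nested sequents. -/
theorem cut_reduction (c : Ctx) (A : Formula)
    (h1 : Deriv (c.fill [.fml A])) (h2 : Deriv (c.fill [.fml A.negate])) :
    Deriv (c.fill []) :=
  cut_reduction_general c A h1 h2
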